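/- arXiv:1212.0216 — 3 statements merged into one kernel-verified Lean document; each statement's English description precedes it below -/
import Mathlib

section
/- Let λ ∈ ℂ be an eigenvalue of γ viewed as a matrix in SL_2(ℂ). There exists an integer n ≥ 1 such that both eigenvalues of γⁿ are real, if and only if the field ℚ(λ) (the subfield of ℂ generated by λ over ℚ) is a Galois extension of ℚ. -/
/-!
Write `K = ℚ(i√d)`, `t = λ + λ⁻¹ = a + b i√d` for the trace of `γ`, and `u = λ - λ⁻¹`. Then
`u² = t² - 4 ∈ K`, and the conjugates of `λ` over `ℚ` lie in `{λ, λ⁻¹, λ̄, λ̄⁻¹}`, so `ℚ(λ)` is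
Galois iff it contains `λ̄` (`isGalois_iff_conj_mem`). Diagonalizing `γ` shows that the eigenvalues
of `γᵐ` are `λᵐ` and `λ⁻ᵐ`, and that `λ` is not a root of unity.

If `λᵐ` is real, write `λᵐ - λ⁻ᵐ = 2qu` with `q ∈ K`, `q ≠ 0`. Realness gives `ū = u q / q̄`, which
lies in `ℚ(λ)` as soon as `K ⊆ ℚ(λ)`, i.e. when `t ∉ ℚ`; for `t ∈ ℚ`, `λ̄` is `λ` or `λ⁻¹` anyway
(`conj_mem_of_real_pow`).

Conversely, let `λ̄ ∈ ℚ(λ)`. Every element of `ℚ(λ)` is `p + q u` with `p, q ∈ K`; squaring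
`ū = p + q u` forces `u ū` to be in `K`, hence rational (`exists_rat_mul_conj`). Since
`2 (ζ + ζ⁻¹) = |t|² - |u|²` for `ζ = λ / λ̄`, the number `ζ + ζ⁻¹` is rational. It is also an
algebraic integer because `λ` is a unit, so it is an integer of absolute value at most `2`, and
`ζ¹² = 1` (`pow_twelve_eq_one`), that is, `λ¹²` is real.
-/

open Matrix Pointwise

/-- `G = SL_2(ℂ)`. -/
abbrev SL2C := Matrix.SpecialLinearGroup (Fin 2) ℂ

/-- The standard topology on `SL_2(ℂ)`, as a subspace of the matrices. -/
instance : TopologicalSpace SL2C :=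
  inferInstanceAs (TopologicalSpace {A : Matrix (Fin 2) (Fin 2) ℂ // A.det = 1})

/-- The order `𝒪 = ℤ[√(-d)]`, embedded in `ℂ` by sending `√(-d)` to `i√d`: the subring
of `ℂ` generated by `i√d`. -/
noncomputable def Od (d : ℕ) : Subring ℂ := Subring.closure {Complex.I * Real.sqrt d}

/-- `Γ = SL_2(𝒪)`, the subgroup of `SL_2(ℂ)` of matrices with entries in `𝒪 = ℤ[√(-d)]`. -/
noncomputable def GammaO (d : ℕ) : Subgroup SL2C where
  carrier := {g | ∀ i j, g.1 i j ∈ Od d}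
  one_mem' := by
    intro i j
    show ((1 : SL2C) : Matrix (Fin 2) (Fin 2) ℂ) i j ∈ Od d
    rw [Matrix.SpecialLinearGroup.coe_one, Matrix.one_apply]
    split
    · exact one_mem _
    · exact zero_mem _
  mul_mem' := by
    intro a b ha hb i j
    show ((a * b : SL2C) : Matrix (Fin 2) (Fin 2) ℂ) i j ∈ Od d
    rw [Matrix.SpecialLinearGroup.coe_mul, Matrix.mul_apply]
    exact Subring.sum_mem _ fun k _ => mul_mem (ha i k) (hb k j)
  inv_mem' := by
    intro a ha i j
    show ((a⁻¹ : SL2C) : Matrix (Fin 2) (Fin 2) ℂ) i j ∈ Od d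
    rw [Matrix.SpecialLinearGroup.coe_inv, Matrix.adjugate_fin_two]
    fin_cases i <;> fin_cases j <;> simp <;>
      first
        | exact ha 1 1
        | exact neg_mem (ha 0 1)
        | exact neg_mem (ha 1 0)
        | exact ha 0 1
        | exact ha 1 0
        | exact ha 0 0

/-! ### The order `𝒪` and the field `K` -/

open Polynomial in
/-- The quartic `(X² - aX + 1)² + d b² X²`, which is
`(X² - tX + 1)(X² - t̄X + 1)` for `t = a + b i√d`. -/
noncomputable def quartic (d : ℕ) (a b : ℤ) : Polynomial ℤ :=
  (X ^ 2 - C a * X + 1) ^ 2 + C ((d : ℤ) * b ^ 2) * X ^ 2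

/-- The generator `i√d` of `𝒪`. -/
noncomputable def om (d : ℕ) : ℂ := Complex.I * Real.sqrt d

/-- The imaginary quadratic field `K = ℚ(i√d) ⊆ ℂ`. -/
noncomputable def quadK (d : ℕ) : IntermediateField ℚ ℂ := IntermediateField.adjoin ℚ {om d}

open ComplexConjugate

theorem om_mul_om (d : ℕ) : om d * om d = -(d : ℂ) := by
  have h : ((Real.sqrt d : ℝ) : ℂ) * (Real.sqrt d : ℝ) = d := by
    rw [← Complex.ofReal_mul, Real.mul_self_sqrt (Nat.cast_nonneg d)]; simp
  unfold om
  linear_combination (Complex.I * Complex.I) * h + (d : ℂ) * Complex.I_mul_I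

theorem conj_om (d : ℕ) : conj (om d) = -om d := by
  simp [om]

theorem exists_of_mem_Od {d : ℕ} {z : ℂ} (hz : z ∈ Od d) : ∃ a b : ℤ, z = a + b * om d := by
  unfold Od at hz
  induction hz using Subring.closure_induction with
  | mem x hx => exact ⟨0, 1, by rw [Set.mem_singleton_iff.1 hx]; simp [om]⟩
  | zero => exact ⟨0, 0, by simp⟩
  | one => exact ⟨1, 0, by simp⟩
  | add x y _ _ hx hy =>
    obtain ⟨a, b, rfl⟩ := hx
    obtain ⟨a', b', rfl⟩ := hy
    exact ⟨a + a', b + b', by push_cast; ring⟩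
  | neg x _ hx =>
    obtain ⟨a, b, rfl⟩ := hx
    exact ⟨-a, -b, by push_cast; ring⟩
  | mul x y _ _ hx hy =>
    obtain ⟨a, b, rfl⟩ := hx
    obtain ⟨a', b', rfl⟩ := hy
    exact ⟨a * a' - d * b * b', a * b' + a' * b, by
      push_cast
      linear_combination ((b : ℂ) * b') * om_mul_om d⟩

theorem om_isIntegral (d : ℕ) : IsIntegral ℚ (om d) := by
  refine ⟨Polynomial.X ^ 2 + Polynomial.C (d : ℚ), by monicity!, ?_⟩
  simp
  linear_combination om_mul_om d

theorem om_mem_quadK (d : ℕ) : om d ∈ quadK d :=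
  IntermediateField.mem_adjoin_simple_self ℚ _

theorem exists_of_mem_quadK {d : ℕ} {z : ℂ} (hz : z ∈ quadK d) :
    ∃ x y : ℚ, z = x + y * om d := by
  have hz' : z ∈ Algebra.adjoin ℚ {om d} := by
    rw [← IntermediateField.adjoin_simple_toSubalgebra_of_isAlgebraic
      (om_isIntegral d).isAlgebraic]
    exact hz
  induction hz' using Algebra.adjoin_induction with
  | mem x hx => exact ⟨0, 1, by rw [Set.mem_singleton_iff.1 hx]; simp⟩
  | algebraMap r => exact ⟨r, 0, by simp⟩
  | add x y hx' hy' hx hy =>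
    have key := IntermediateField.algebra_adjoin_le_adjoin ℚ {om d}
    obtain ⟨a, b, rfl⟩ := hx (key hx')
    obtain ⟨a', b', rfl⟩ := hy (key hy')
    exact ⟨a + a', b + b', by push_cast; ring⟩
  | mul x y hx' hy' hx hy =>
    have key := IntermediateField.algebra_adjoin_le_adjoin ℚ {om d}
    obtain ⟨a, b, rfl⟩ := hx (key hx')
    obtain ⟨a', b', rfl⟩ := hy (key hy')
    exact ⟨a * a' - d * b * b', a * b' + a' * b, by
      push_cast
      linear_combination ((b : ℂ) * b') * om_mul_om d⟩

theorem ratCast_mem (F : IntermediateField ℚ ℂ) (x : ℚ) : (x : ℂ) ∈ F := by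
  exact F.algebraMap_mem x

theorem conj_mem_quadK {d : ℕ} {z : ℂ} (hz : z ∈ quadK d) : conj z ∈ quadK d := by
  obtain ⟨x, y, rfl⟩ := exists_of_mem_quadK hz
  simp only [map_add, map_mul, conj_om, map_ratCast]
  exact add_mem (ratCast_mem _ _) (mul_mem (ratCast_mem _ _) (neg_mem (om_mem_quadK d)))

theorem exists_rat_of_mem_quadK {d : ℕ} {z : ℂ} (hz : z ∈ quadK d)
    (hr : conj z = z) : ∃ x : ℚ, z = x := by
  obtain ⟨x, y, rfl⟩ := exists_of_mem_quadK hz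
  simp only [map_add, map_mul, conj_om, map_ratCast] at hr
  have h : (y : ℂ) * om d = 0 := by linear_combination (-1 / 2 : ℂ) * hr
  exact ⟨x, by rw [h, add_zero]⟩

/-! ### Integrality and roots of unity -/

open Polynomial in
theorem aeval_quartic (d : ℕ) (a b : ℤ) (z : ℂ) :
    aeval z (quartic d a b) =
      (z ^ 2 - (a + b * om d) * z + 1) * (z ^ 2 - (a - b * om d) * z + 1) := by
  simp [quartic]
  linear_combination (b : ℂ) ^ 2 * z ^ 2 * om_mul_om d

open Polynomial in
theorem quartic_monic (d : ℕ) (a b : ℤ) : (quartic d a b).Monic := by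
  unfold quartic
  monicity!

theorem isIntegral_of_add_inv {d : ℕ} {a b : ℤ} {z : ℂ} (hz : z ≠ 0)
    (h : z + z⁻¹ = a + b * om d) : IsIntegral ℤ z := by
  refine ⟨quartic d a b, quartic_monic d a b, ?_⟩
  change Polynomial.aeval z _ = 0
  rw [aeval_quartic, ← h]
  field_simp
  ring

/-- Niven's theorem in algebraic form: an algebraic integer on the unit circle with rational
real part is a root of unity, of order dividing `12`, because `z + z̄` is then an integer
in `[-2, 2]`. -/
theorem pow_twelve_eq_one {z : ℂ} (hz : IsIntegral ℤ z) (h1 : z * conj z = 1) {q : ℚ}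
    (hq : z + conj z = q) : z ^ 12 = 1 := by
  have hi : IsIntegral ℤ (z + conj z) :=
    hz.add (hz.map (Complex.conjAe.toAlgHom.restrictScalars ℤ))
  rw [hq] at hi
  have hi' : IsIntegral ℤ q :=
    (isIntegral_algebraMap_iff (algebraMap ℚ ℂ).injective).1 (by simpa using hi)
  obtain ⟨k, rfl⟩ := IsIntegrallyClosed.isIntegral_iff.1 hi'
  have hk : z + conj z = (k : ℂ) := by simpa using hq
  have hre : 2 * z.re = k := by
    have := congrArg Complex.re hk
    simp at this
    linarith
  have hn : z.re ^ 2 + z.im ^ 2 = 1 := by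
    have := congrArg Complex.re h1
    simp at this
    linarith
  have hk4 : k ^ 2 ≤ 4 := by
    have : (k : ℝ) ^ 2 ≤ 4 := by rw [← hre]; nlinarith [sq_nonneg z.im]
    exact_mod_cast this
  have hl : -2 ≤ k := by nlinarith
  have hu : k ≤ 2 := by nlinarith
  have hquad : z ^ 2 = k * z - 1 := by linear_combination z * hk - h1
  interval_cases k <;> push_cast at hquad
  · have : (z + 1) ^ 2 = 0 := by linear_combination hquad
    have : z = -1 := by linear_combination pow_eq_zero_iff (two_ne_zero) |>.1 this
    rw [this]; norm_num
  · have : z ^ 3 = 1 := by linear_combination (z - 1) * hquad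
    rw [show z ^ 12 = (z ^ 3) ^ 4 by ring, this]; norm_num
  · have : z ^ 2 = -1 := by linear_combination hquad
    rw [show z ^ 12 = (z ^ 2) ^ 6 by ring, this]; norm_num
  · have : z ^ 3 = -1 := by linear_combination (z + 1) * hquad
    rw [show z ^ 12 = (z ^ 3) ^ 4 by ring, this]; norm_num
  · have : (z - 1) ^ 2 = 0 := by linear_combination hquad
    have : z = 1 := by linear_combination pow_eq_zero_iff (two_ne_zero) |>.1 this
    rw [this]; norm_num

/-! ### Conjugates of an eigenvalue -/

theorem eq_or_eq_inv {z w t : ℂ} (hz : z ≠ 0) (h : z + z⁻¹ = t) (hw : w ^ 2 - t * w + 1 = 0) :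
    w = z ∨ w = z⁻¹ := by
  have : (w - z) * (w - z⁻¹) = 0 := by
    rw [← h] at hw
    linear_combination hw + mul_inv_cancel₀ hz
  rcases mul_eq_zero.1 this with h | h
  · exact Or.inl (sub_eq_zero.1 h)
  · exact Or.inr (sub_eq_zero.1 h)

/-- The conjugates of `λ` over `ℚ` are among `λ^{±1}`, `λ̄^{±1}`, so `ℚ(λ)` is normal exactly
when it contains `λ̄`. -/
theorem isGalois_iff_conj_mem {d : ℕ} {a b : ℤ} {z : ℂ} (hz : z ≠ 0)
    (h : z + z⁻¹ = a + b * om d) :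
    IsGalois ℚ (IntermediateField.adjoin ℚ ({z} : Set ℂ)) ↔
      conj z ∈ IntermediateField.adjoin ℚ ({z} : Set ℂ) := by
  set L := IntermediateField.adjoin ℚ ({z} : Set ℂ) with hL
  have hzL : z ∈ L := IntermediateField.mem_adjoin_simple_self ℚ z
  have hint : IsIntegral ℚ z := (isIntegral_of_add_inv hz h).tower_top
  constructor
  · intro hg
    have hs := hg.to_normal.splits ⟨z, hzL⟩
    rw [show minpoly ℚ (⟨z, hzL⟩ : L) = minpoly ℚ z from
      (minpoly.algHom_eq L.val L.val.injective ⟨z, hzL⟩).symm] at hs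
    refine (IntermediateField.splits_iff_mem (IsAlgClosed.splits _)).1 hs _ ?_
    rw [Polynomial.mem_rootSet]
    refine ⟨minpoly.ne_zero hint, ?_⟩
    have := Polynomial.aeval_algHom_apply (Complex.conjAe.toAlgHom.restrictScalars ℚ) z
      (minpoly ℚ z)
    rw [minpoly.aeval, map_zero] at this
    exact this
  · intro hc
    have hh : conj z + (conj z)⁻¹ = a - b * om d := by
      have := congrArg conj h
      simp only [map_add, map_mul, conj_om, map_intCast, map_inv₀] at this
      linear_combination this
    have hcz : conj z ≠ 0 := by simpa using hz
    set p := (quartic d a b).map (Int.castRingHom ℚ) with hp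
    have hp0 : p ≠ 0 := ((quartic_monic d a b).map _).ne_zero
    have haev : ∀ w : ℂ, Polynomial.aeval w p = Polynomial.aeval w (quartic d a b) := fun w => by
      rw [hp]; exact Polynomial.aeval_map_algebraMap ℚ w (quartic d a b)
    have hLe : L = IntermediateField.adjoin ℚ (p.rootSet ℂ) := by
      apply le_antisymm
      · rw [hL, IntermediateField.adjoin_simple_le_iff]
        apply IntermediateField.subset_adjoin
        rw [Polynomial.mem_rootSet]
        refine ⟨hp0, ?_⟩
        rw [haev, aeval_quartic, ← h]
        field_simp
        ring
      · rw [IntermediateField.adjoin_le_iff]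
        intro w hw
        rw [Polynomial.mem_rootSet, haev, aeval_quartic] at hw
        rcases mul_eq_zero.1 hw.2 with h1 | h1
        · rcases eq_or_eq_inv hz h h1 with rfl | rfl
          · exact hzL
          · exact inv_mem hzL
        · rcases eq_or_eq_inv hcz hh h1 with rfl | rfl
          · exact hc
          · exact inv_mem hc
    have hsp : Polynomial.IsSplittingField ℚ L p := by
      rw [hLe]
      exact IntermediateField.adjoin_rootSet_isSplittingField (IsAlgClosed.splits _)
    have hn : Normal ℚ L := Normal.of_isSplittingField p
    exact ⟨⟩

/-! ### Decomposition over `K` -/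

/-- Every element of `ℚ(z)` has the form `p + q u` with `p, q ∈ K` and `u = z - z⁻¹`,
since `u² = (z + z⁻¹)² - 4 ∈ K`. -/
theorem exists_decomp {d : ℕ} {z t : ℂ} (hz : z ≠ 0) (hint : IsIntegral ℚ z)
    (h : z + z⁻¹ = t) (ht : t ∈ quadK d) {x : ℂ}
    (hx : x ∈ IntermediateField.adjoin ℚ ({z} : Set ℂ)) :
    ∃ p ∈ quadK d, ∃ q ∈ quadK d, x = p + q * (z - z⁻¹) := by
  have hx' : x ∈ Algebra.adjoin ℚ {z} := by
    rw [← IntermediateField.adjoin_simple_toSubalgebra_of_isAlgebraic hint.isAlgebraic]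
    exact hx
  clear hx
  have h2 : (2 : ℂ) ∈ quadK d := ofNat_mem _ 2
  have hD : (z - z⁻¹) * (z - z⁻¹) = t ^ 2 - 4 := by
    rw [← h]; field_simp; ring
  have hDK : t ^ 2 - 4 ∈ quadK d := sub_mem (pow_mem ht 2) (ofNat_mem _ 4)
  induction hx' using Algebra.adjoin_induction with
  | mem x hx =>
    refine ⟨t / 2, div_mem ht h2, 1 / 2, div_mem (one_mem _) h2, ?_⟩
    rw [Set.mem_singleton_iff.1 hx]
    linear_combination (1 / 2 : ℂ) * h
  | algebraMap r => exact ⟨r, ratCast_mem _ _, 0, zero_mem _, by simp⟩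
  | add x y _ _ hx hy =>
    obtain ⟨p, hp, q, hq, rfl⟩ := hx
    obtain ⟨p', hp', q', hq', rfl⟩ := hy
    exact ⟨p + p', add_mem hp hp', q + q', add_mem hq hq', by ring⟩
  | mul x y _ _ hx hy =>
    obtain ⟨p, hp, q, hq, rfl⟩ := hx
    obtain ⟨p', hp', q', hq', rfl⟩ := hy
    exact ⟨p * p' + q * q' * (t ^ 2 - 4),
      add_mem (mul_mem hp hp') (mul_mem (mul_mem hq hq') hDK),
      p * q' + q * p', add_mem (mul_mem hp hq') (mul_mem hq hp'), by
        linear_combination (q * q') * hD⟩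

/-- The decomposition in `K + K u` of powers of `z`; replacing `z` by `z⁻¹` changes the sign
of `u`. -/
theorem exists_pow_sub {d : ℕ} {z t : ℂ} (hz : z ≠ 0)
    (h : z + z⁻¹ = t) (ht : t ∈ quadK d) (n : ℕ) :
    ∃ p ∈ quadK d, ∃ q ∈ quadK d,
      z ^ n = p + q * (z - z⁻¹) ∧ z⁻¹ ^ n = p - q * (z - z⁻¹) := by
  have h2 : (2 : ℂ) ∈ quadK d := ofNat_mem _ 2
  have hD : (z - z⁻¹) * (z - z⁻¹) = t ^ 2 - 4 := by
    rw [← h]; field_simp; ring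
  have hDK : t ^ 2 - 4 ∈ quadK d := sub_mem (pow_mem ht 2) (ofNat_mem _ 4)
  induction n with
  | zero => exact ⟨1, one_mem _, 0, zero_mem _, by simp, by simp⟩
  | succ n ih =>
    obtain ⟨p, hp, q, hq, h1, h3⟩ := ih
    refine ⟨(p * t + q * (t ^ 2 - 4)) / 2,
      div_mem (add_mem (mul_mem hp ht) (mul_mem hq hDK)) h2,
      (p + q * t) / 2, div_mem (add_mem hp (mul_mem hq ht)) h2, ?_, ?_⟩
    · rw [pow_succ, h1]
      linear_combination (p / 2 + q / 2 * (z - z⁻¹)) * h + q / 2 * hD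
    · rw [pow_succ, h3]
      linear_combination (p / 2 - q / 2 * (z - z⁻¹)) * h + q / 2 * hD

/-! ### Real powers and membership of the complex conjugate -/

/-- If `t = z + z⁻¹` is rational, then `z̄ ∈ {z, z⁻¹}`. -/
theorem conj_eq_of_trace_rational {a : ℤ} {z : ℂ} (hz : z ≠ 0) (h : z + z⁻¹ = a) :
    conj z = z ∨ conj z = z⁻¹ := by
  refine eq_or_eq_inv hz h ?_
  have hcz : conj z ≠ 0 := by simpa using hz
  have := congrArg conj h
  simp only [map_add, map_intCast, map_inv₀] at this
  rw [← this]; field_simp; ring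

/-- A real power `zᵐ` puts `z̄` in `ℚ(z)`: writing `zᵐ - z⁻ᵐ = 2qu` with `q ∈ K` and
`u = z - z⁻¹`, realness gives `ū = u q / q̄`. -/
theorem conj_mem_of_real_pow {d : ℕ} {a b : ℤ} {z : ℂ} (hz : z ≠ 0)
    (h : z + z⁻¹ = a + b * om d) (hio : ∀ m : ℕ, 1 ≤ m → z ^ m ≠ 1) {m : ℕ} (hm : 1 ≤ m)
    (hr : conj (z ^ m) = z ^ m) :
    conj z ∈ IntermediateField.adjoin ℚ ({z} : Set ℂ) := by
  set L := IntermediateField.adjoin ℚ ({z} : Set ℂ) with hL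
  have hzL : z ∈ L := IntermediateField.mem_adjoin_simple_self ℚ z
  rcases eq_or_ne b 0 with rfl | hb
  · rcases conj_eq_of_trace_rational (a := a) hz (by simpa using h) with h | h <;> rw [h]
    · exact hzL
    · exact inv_mem hzL
  have htL : (a + b * om d : ℂ) ∈ L := h ▸ add_mem hzL (inv_mem hzL)
  have hbC : (b : ℂ) ≠ 0 := by exact_mod_cast hb
  have homL : om d ∈ L := by
    rw [show om d = ((a + b * om d : ℂ) - a) / b by field_simp; ring]
    exact div_mem (sub_mem htL (intCast_mem _ _)) (intCast_mem _ _)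
  have hKL : quadK d ≤ L := by
    rw [quadK, IntermediateField.adjoin_simple_le_iff]; exact homL
  have htK : (a + b * om d : ℂ) ∈ quadK d :=
    add_mem (intCast_mem _ _) (mul_mem (intCast_mem _ _) (om_mem_quadK d))
  obtain ⟨p, hp, q, hq, h1, h2⟩ := exists_pow_sub hz h htK m
  set u := z - z⁻¹ with hu
  have hzm : z ^ m ≠ 0 := pow_ne_zero _ hz
  have hq0 : q ≠ 0 := by
    rintro rfl
    refine hio (m + m) (by omega) ?_
    rw [pow_add]
    have : z ^ m = z⁻¹ ^ m := by rw [h1, h2]; ring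
    nth_rewrite 2 [this]
    rw [inv_pow, mul_inv_cancel₀ hzm]
  have hcq : conj q ≠ 0 := by simpa using hq0
  have hr2 : conj (z⁻¹ ^ m) = z⁻¹ ^ m := by
    rw [inv_pow, map_inv₀, hr]
  have hcu : conj u = q * u / conj q := by
    have e : conj (q * u) = q * u := by
      have : q * u = (z ^ m - z⁻¹ ^ m) / 2 := by rw [h1, h2]; ring
      rw [this, map_div₀, map_sub, hr, hr2, map_ofNat]
    rw [map_mul] at e
    field_simp
    linear_combination e
  have hcz : conj z = (conj (a + b * om d : ℂ) + conj u) / 2 := by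
    rw [← h, hu, ← map_add, ← map_ofNat conj 2, ← map_div₀]
    congr 1; ring
  rw [hcz, hcu]
  exact div_mem (add_mem (hKL (conj_mem_quadK htK)) (div_mem (mul_mem (hKL hq)
    (sub_mem hzL (inv_mem hzL))) (hKL (conj_mem_quadK hq)))) (ofNat_mem _ 2)

theorem isIntegral_conj_div {d : ℕ} {a b : ℤ} {z : ℂ} (hz : z ≠ 0)
    (h : z + z⁻¹ = a + b * om d) : IsIntegral ℤ (z / conj z) := by
  rw [div_eq_mul_inv]
  have h1 : IsIntegral ℤ z⁻¹ := isIntegral_of_add_inv (d := d) (a := a) (b := b)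
    (inv_ne_zero hz) (by rw [inv_inv, ← h]; ring)
  refine (isIntegral_of_add_inv hz h).mul ?_
  rw [← map_inv₀]
  exact h1.map (Complex.conjAe.toAlgHom.restrictScalars ℤ)

/-- If `z̄ ∈ ℚ(z)`, then `u ū` is rational for `u = z - z⁻¹`. -/
theorem exists_rat_mul_conj {d : ℕ} {a b : ℤ} {z : ℂ} (hz : z ≠ 0)
    (h : z + z⁻¹ = a + b * om d)
    (hc : conj z ∈ IntermediateField.adjoin ℚ ({z} : Set ℂ)) :
    ∃ x : ℚ, (z - z⁻¹) * conj (z - z⁻¹) = x := by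
  have htK : (a + b * om d : ℂ) ∈ quadK d :=
    add_mem (intCast_mem _ _) (mul_mem (intCast_mem _ _) (om_mem_quadK d))
  have hint : IsIntegral ℚ z := (isIntegral_of_add_inv hz h).tower_top
  have hD : (z - z⁻¹) * (z - z⁻¹) = (a + b * om d) ^ 2 - 4 := by
    rw [← h]; field_simp; ring
  have hDK : (z - z⁻¹) * (z - z⁻¹) ∈ quadK d := hD ▸ sub_mem (pow_mem htK 2) (ofNat_mem _ 4)
  have hcu : conj (z - z⁻¹) ∈ IntermediateField.adjoin ℚ ({z} : Set ℂ) := by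
    rw [map_sub, map_inv₀]; exact sub_mem hc (inv_mem hc)
  obtain ⟨p, hp, q, hq, e⟩ := exists_decomp hz hint h htK hcu
  clear hcu hc h hD hint
  set u := z - z⁻¹ with hu
  -- A real element of `K` is rational, so membership of `u ū` in `K` suffices.
  suffices hK : u * conj u ∈ quadK d from
    exists_rat_of_mem_quadK hK (by rw [map_mul, Complex.conj_conj, mul_comm])
  by_cases huK : u ∈ quadK d
  · exact mul_mem huK (conj_mem_quadK huK)
  -- Squaring `ū = p + q u` gives `2pqu ∈ K`.
  have hpq : p * q = 0 := by
    by_contra hne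
    apply huK
    have h2 : u = (conj (u * u) - p ^ 2 - q ^ 2 * (u * u)) / (2 * (p * q)) := by
      rw [map_mul, e, eq_div_iff (mul_ne_zero two_ne_zero hne)]
      ring
    rw [h2]
    exact div_mem (sub_mem (sub_mem (conj_mem_quadK hDK) (pow_mem hp 2))
      (mul_mem (pow_mem hq 2) hDK)) (mul_mem (ofNat_mem _ 2) (mul_mem hp hq))
  rcases mul_eq_zero.1 hpq with rfl | rfl
  · rw [e, show u * (0 + q * u) = q * (u * u) by ring]
    exact mul_mem hq hDK
  · exfalso
    apply huK
    have := conj_mem_quadK (d := d) (z := conj u) (by rw [e]; simpa using hp)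
    rwa [Complex.conj_conj] at this

/-- The equivalence in terms of the eigenvalue alone. -/
theorem real_pow_iff_isGalois {d : ℕ} {a b : ℤ} {z : ℂ} (hz : z ≠ 0)
    (h : z + z⁻¹ = a + b * om d) (hio : ∀ m : ℕ, 1 ≤ m → z ^ m ≠ 1) :
    (∃ m : ℕ, 1 ≤ m ∧ conj (z ^ m) = z ^ m) ↔
      IsGalois ℚ (IntermediateField.adjoin ℚ ({z} : Set ℂ)) := by
  rw [isGalois_iff_conj_mem hz h]
  constructor
  · rintro ⟨m, hm, hr⟩
    exact conj_mem_of_real_pow hz h hio hm hr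
  intro hc
  have hcz : conj z ≠ 0 := by simpa using hz
  obtain ⟨x, hx⟩ := exists_rat_mul_conj hz h hc
  have hh : conj z + (conj z)⁻¹ = a - b * om d := by
    have := congrArg conj h
    simp only [map_add, map_mul, conj_om, map_intCast, map_inv₀] at this
    linear_combination this
  have hcc : conj (z / conj z) = conj z / z := by simp
  -- `2 (z/z̄ + z̄/z) = |t|² - |u|²`
  have hsum : z / conj z + conj (z / conj z) = (((a ^ 2 + d * b ^ 2 - x) / 2 : ℚ) : ℂ) := by
    push_cast
    rw [← hx, hcc]
    have ht : (a : ℂ) ^ 2 + d * b ^ 2 = (z + z⁻¹) * (conj z + (conj z)⁻¹) := by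
      rw [h, hh]; linear_combination (b : ℂ) ^ 2 * om_mul_om d
    rw [ht, map_sub, map_inv₀]
    field_simp
    ring
  have h12 := pow_twelve_eq_one (isIntegral_conj_div hz h)
    (by rw [hcc]; field_simp) hsum
  refine ⟨12, by norm_num, ?_⟩
  rw [div_pow, div_eq_one_iff_eq (pow_ne_zero _ hcz)] at h12
  rw [map_pow, h12]

/-! ### Passage from matrices to eigenvalues -/

/-- Powers of a diagonalized matrix: `γᵐ - μ` has determinant `(xᵐ - μ)(yᵐ - μ)`, where `x`, `y`
are the diagonal entries of `g γ g⁻¹`. -/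
theorem det_pow_sub {γ g : SL2C}
    (h01 : (g * γ * g⁻¹).1 0 1 = 0) (h10 : (g * γ * g⁻¹).1 1 0 = 0) (m : ℕ) (μ : ℂ) :
    (((γ ^ m : SL2C) : Matrix (Fin 2) (Fin 2) ℂ) - μ • 1).det =
      ((g * γ * g⁻¹).1 0 0 ^ m - μ) * ((g * γ * g⁻¹).1 1 1 ^ m - μ) := by
  set δ := g * γ * g⁻¹ with hδ
  have hdiag : (δ : Matrix (Fin 2) (Fin 2) ℂ) = Matrix.diagonal ![δ.1 0 0, δ.1 1 1] := by
    ext i j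
    fin_cases i <;> fin_cases j <;> simp [h01, h10]
  have hpow : ((δ ^ m : SL2C) : Matrix (Fin 2) (Fin 2) ℂ) =
      Matrix.diagonal ![δ.1 0 0 ^ m, δ.1 1 1 ^ m] := by
    rw [Matrix.SpecialLinearGroup.coe_pow, hdiag, Matrix.diagonal_pow]
    congr 1
    ext i
    fin_cases i <;> simp
  have hconj : δ ^ m = g * γ ^ m * g⁻¹ := by rw [hδ, conj_pow]
  have hmul : ((δ ^ m : SL2C) : Matrix (Fin 2) (Fin 2) ℂ) - μ • 1 =
      (g : Matrix (Fin 2) (Fin 2) ℂ) * (((γ ^ m : SL2C) : Matrix (Fin 2) (Fin 2) ℂ) - μ • 1) *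
        ((g⁻¹ : SL2C) : Matrix (Fin 2) (Fin 2) ℂ) := by
    have hgg : (g : Matrix (Fin 2) (Fin 2) ℂ) * ((g⁻¹ : SL2C) : Matrix (Fin 2) (Fin 2) ℂ) = 1 := by
      rw [← Matrix.SpecialLinearGroup.coe_mul, mul_inv_cancel, Matrix.SpecialLinearGroup.coe_one]
    rw [hconj, Matrix.SpecialLinearGroup.coe_mul, Matrix.SpecialLinearGroup.coe_mul,
      mul_sub, sub_mul, Matrix.mul_smul, Matrix.smul_mul, mul_one, hgg]
  have hdet : (((δ ^ m : SL2C) : Matrix (Fin 2) (Fin 2) ℂ) - μ • 1).det =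
      (((γ ^ m : SL2C) : Matrix (Fin 2) (Fin 2) ℂ) - μ • 1).det := by
    rw [hmul, Matrix.det_mul, Matrix.det_mul, g.2, (g⁻¹).2, one_mul, mul_one]
  rw [← hdet, hpow, Matrix.det_fin_two]
  simp

theorem pow_eq_one_of_diag {γ g : SL2C}
    (h01 : (g * γ * g⁻¹).1 0 1 = 0) (h10 : (g * γ * g⁻¹).1 1 0 = 0) {m : ℕ}
    (h0 : (g * γ * g⁻¹).1 0 0 ^ m = 1) (h1 : (g * γ * g⁻¹).1 1 1 ^ m = 1) : γ ^ m = 1 := by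
  have hone : (g * γ * g⁻¹) ^ m = 1 := by
    set δ := g * γ * g⁻¹
    have hdiag : (δ : Matrix (Fin 2) (Fin 2) ℂ) = Matrix.diagonal ![δ.1 0 0, δ.1 1 1] := by
      ext i j
      fin_cases i <;> fin_cases j <;> simp [h01, h10]
    apply Subtype.ext
    change ((δ ^ m : SL2C) : Matrix (Fin 2) (Fin 2) ℂ) = ((1 : SL2C) : Matrix (Fin 2) (Fin 2) ℂ)
    rw [Matrix.SpecialLinearGroup.coe_pow, hdiag, Matrix.diagonal_pow,
      Matrix.SpecialLinearGroup.coe_one, ← Matrix.diagonal_one]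
    congr 1
    ext i
    fin_cases i <;> simp [h0, h1]
  rw [conj_pow] at hone
  simpa [mul_inv_eq_one] using hone

/-- Let `γ ∈ SL_2(ℤ[√(-d)])` be semisimple of infinite order and `λ` an eigenvalue of `γ`.
Some power `γⁿ` (`n ≥ 1`) has both eigenvalues real iff `ℚ(λ)/ℚ` is Galois. -/
theorem statement_15 (d : ℕ) (hd : 0 < d) (hsf : Squarefree d)
    (γ : SL2C) (hγ : γ ∈ GammaO d)
    (hss : ∃ g : SL2C, (g * γ * g⁻¹).1 0 1 = 0 ∧ (g * γ * g⁻¹).1 1 0 = 0)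
    (hio : ∀ m : ℕ, 1 ≤ m → γ ^ m ≠ 1)
    (lam : ℂ) (hlam : ((γ : Matrix (Fin 2) (Fin 2) ℂ) - lam • 1).det = 0) :
    (∃ m : ℕ, 1 ≤ m ∧
      ∀ μ : ℂ, (((γ ^ m : SL2C) : Matrix (Fin 2) (Fin 2) ℂ) - μ • 1).det = 0 → μ.im = 0) ↔
    IsGalois ℚ (IntermediateField.adjoin ℚ ({lam} : Set ℂ)) := by
  obtain ⟨g, h01, h10⟩ := hss
  have hdet := det_pow_sub h01 h10
  have hone := fun m => pow_eq_one_of_diag h01 h10 (m := m)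
  have hxy : (g * γ * g⁻¹).1 0 0 * (g * γ * g⁻¹).1 1 1 = 1 := by
    have := (g * γ * g⁻¹).2
    rw [Matrix.det_fin_two, h01, zero_mul, sub_zero] at this
    exact this
  clear h01 h10
  generalize (g * γ * g⁻¹).1 0 0 = x at *
  generalize (g * γ * g⁻¹).1 1 1 = y at *
  -- The spectrum is symmetric in `x` and `y`: arrange that `lam = x`.
  wlog hx : lam = x generalizing x y with H
  · have h1 := hdet 1 lam
    rw [pow_one, hlam] at h1
    rcases mul_eq_zero.1 h1.symm with h | h
    · exact absurd (by linear_combination -h) hx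
    · exact H y x (fun m μ => by rw [hdet m μ, mul_comm]) (fun m h0 h1 => hone m h1 h0)
        (by rw [mul_comm, hxy]) (by linear_combination -h)
  subst hx
  have hz : lam ≠ 0 := left_ne_zero_of_mul_eq_one hxy
  obtain rfl : y = lam⁻¹ := eq_inv_of_mul_eq_one_right hxy
  obtain ⟨a, b, hab⟩ := exists_of_mem_Od (add_mem (hγ 0 0) (hγ 1 1))
  have htr : lam + lam⁻¹ = a + b * om d := by
    rw [← hab]
    have e1 := γ.2
    have e2 := hdet 1 1
    rw [Matrix.det_fin_two] at e1
    simp [Matrix.det_fin_two] at e2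
    linear_combination e2 - e1 + hxy
  have hroot : ∀ m : ℕ, 1 ≤ m → lam ^ m ≠ 1 := fun m hm h =>
    hio m hm (hone m h (by rw [inv_pow, h, inv_one]))
  rw [← real_pow_iff_isGalois hz htr hroot]
  refine exists_congr fun m => and_congr_right fun _ => ?_
  simp only [hdet, Complex.conj_eq_iff_im]
  constructor
  · intro h
    exact h _ (by simp)
  · intro h μ hμ
    rcases mul_eq_zero.1 hμ with e | e
    · rwa [← sub_eq_zero.1 e]
    · rw [← sub_eq_zero.1 e, inv_pow, Complex.inv_im, h]; simp
end

section
/- Let g ∈ SL_2(ℂ) be such that gγg⁻¹ ∈ C. Then the orbit C·π(g) is a compact subset of X = SL_2(ℂ)/SL_2(𝒪). -/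
/-!
Write `gγg⁻¹ = diag(u, u⁻¹)`. If `|u| ≠ 1`, every diagonal matrix is a power of `gγg⁻¹` times a
diagonal matrix with entry in a compact annulus, and `gγg⁻¹` fixes `π(g)` because `γ ∈ Γ`; hence
the orbit is a continuous image of the annulus (`isCompact_orbit`).

If `|u| = 1`, then `tr γ = u + u⁻¹ = 2 Re u` is a real element of `ℤ[√(-d)]`, hence an integer in
`[-2, 2]`. So `u` is a root of one of the five polynomials `t² - at + 1` with `|a| ≤ 2`, which gives
`u ^ 12 = 1` (`pow_twelve_eq_one`), and `γ` would have finite order.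
-/

open Matrix Pointwise

/-- `C`: the set of diagonal matrices in `SL_2(ℂ)`. -/
def Cdiag : Set SL2C := {g | g.1 0 1 = 0 ∧ g.1 1 0 = 0}

/-- `A`: the set of diagonal matrices in `SL_2(ℂ)` with positive real diagonal entries. -/
def Apos : Set SL2C := {g | g.1 0 1 = 0 ∧ g.1 1 0 = 0 ∧
  (g.1 0 0).im = 0 ∧ 0 < (g.1 0 0).re ∧ (g.1 1 1).im = 0 ∧ 0 < (g.1 1 1).re}

/-- The isomorphism `u ↦ diag(u, u⁻¹)` of `ℂˣ` onto the diagonal subgroup of `SL_2(ℂ)`. -/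
noncomputable def diagHom : ℂˣ →* SL2C where
  toFun u := ⟨!![(u : ℂ), 0; 0, (u : ℂ)⁻¹], by simp [Matrix.det_fin_two]⟩
  map_one' := by
    ext i j
    fin_cases i <;> fin_cases j <;> simp
  map_mul' u v := by
    refine Subtype.ext ?_
    change _ = !![(u : ℂ), 0; 0, (u : ℂ)⁻¹] * !![(v : ℂ), 0; 0, (v : ℂ)⁻¹]
    ext i j
    fin_cases i <;> fin_cases j <;> simp [mul_comm]

theorem diagHom_val (u : ℂˣ) : (diagHom u).1 = !![(u : ℂ), 0; 0, (u : ℂ)⁻¹] := rfl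

theorem mem_Cdiag_iff (c : SL2C) : c ∈ Cdiag ↔ ∃ u : ℂˣ, diagHom u = c := by
  constructor
  · rintro ⟨h01, h10⟩
    have hdet : c.1 0 0 * c.1 1 1 = 1 := by
      have := c.2
      rw [Matrix.det_fin_two, h01] at this
      simpa using this
    have h0 : c.1 0 0 ≠ 0 := left_ne_zero_of_mul_eq_one hdet
    refine ⟨Units.mk0 _ h0, Subtype.ext ?_⟩
    rw [diagHom_val]
    refine Eq.trans ?_ (Matrix.eta_fin_two c.1).symm
    rw [h01, h10, eq_inv_of_mul_eq_one_right hdet, Units.val_mk0]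
  · rintro ⟨u, rfl⟩
    simp [Cdiag, diagHom_val]

theorem exists_int_of_mem_Od {d : ℕ} {z : ℂ} (hz : z ∈ Od d) :
    ∃ a b : ℤ, z = a + b * (Complex.I * Real.sqrt d) := by
  have hsq : (Complex.I * Real.sqrt d) * (Complex.I * Real.sqrt d) = -(d : ℂ) := by
    have h : ((Real.sqrt d : ℝ) : ℂ) * (Real.sqrt d : ℝ) = (d : ℂ) := by
      rw [← Complex.ofReal_mul, Real.mul_self_sqrt (Nat.cast_nonneg d), Complex.ofReal_natCast]
    linear_combination (Complex.I * Complex.I) * h + (d : ℂ) * Complex.I_mul_I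
  induction hz using Subring.closure_induction with
  | mem x hx => exact ⟨0, 1, by simpa using hx⟩
  | zero => exact ⟨0, 0, by simp⟩
  | one => exact ⟨1, 0, by simp⟩
  | add x y _ _ hx hy =>
    obtain ⟨a, b, rfl⟩ := hx
    obtain ⟨a', b', rfl⟩ := hy
    exact ⟨a + a', b + b', by push_cast; ring⟩
  | neg x _ hx =>
    obtain ⟨a, b, rfl⟩ := hx
    exact ⟨-a, -b, by push_cast; ring⟩
  | mul x y _ _ hx hy =>
    obtain ⟨a, b, rfl⟩ := hx
    obtain ⟨a', b', rfl⟩ := hy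
    refine ⟨a * a' - b * b' * d, a * b' + a' * b, ?_⟩
    push_cast
    linear_combination (b : ℂ) * b' * hsq

/-- If `g` conjugates `γ ∈ Γ` to `diag(u, u⁻¹)`, then `diag(u, u⁻¹)` fixes the coset `gΓ`. -/
theorem diagHom_zpow_smul {d : ℕ} {γ g : SL2C} (hγ : γ ∈ GammaO d) {u : ℂˣ}
    (hu : diagHom u = g * γ * g⁻¹) (n : ℤ) :
    diagHom (u ^ n) • (QuotientGroup.mk g : SL2C ⧸ GammaO d) = QuotientGroup.mk g := by
  have h : diagHom (u ^ n) * g = g * γ ^ n := by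
    rw [map_zpow, hu, conj_zpow]
    group
  change (QuotientGroup.mk (diagHom (u ^ n) * g) : SL2C ⧸ GammaO d) = _
  rw [h]
  exact QuotientGroup.mk_mul_of_mem g (zpow_mem hγ n)

theorem isCompact_orbit {d : ℕ} {γ g : SL2C} (hγ : γ ∈ GammaO d) {u : ℂˣ}
    (hu : diagHom u = g * γ * g⁻¹) (h1 : 1 < ‖(u : ℂ)‖) :
    IsCompact ((· • (QuotientGroup.mk g : SL2C ⧸ GammaO d)) '' Cdiag) := by
  let S : Set ℂ := {z | 1 ≤ ‖z‖ ∧ ‖z‖ ≤ ‖(u : ℂ)‖}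
  have hS : IsCompact S := by
    refine (isCompact_closedBall (0 : ℂ) ‖(u : ℂ)‖).of_isClosed_subset ?_ ?_
    · exact (isClosed_le continuous_const continuous_norm).inter
        (isClosed_le continuous_norm continuous_const)
    · intro z hz
      simpa using hz.2
  have hS0 : ∀ z : S, (z : ℂ) ≠ 0 := fun z hz => by
    have := z.2.1
    rw [hz, norm_zero] at this
    linarith
  let f : S → SL2C := fun z => diagHom (Units.mk0 z (hS0 z))
  have hf : Continuous f := by
    refine Continuous.subtype_mk (f := fun z : S => !![(z : ℂ), 0; 0, (z : ℂ)⁻¹]) ?_ _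
    refine continuous_matrix fun i j => ?_
    fin_cases i <;> fin_cases j
    · exact continuous_subtype_val
    · exact continuous_const
    · exact continuous_const
    · exact continuous_subtype_val.inv₀ hS0
  -- Multiplication by the fixed matrix `g` is continuous, so `z ↦ diag(z, z⁻¹) gΓ` is continuous.
  have hF : Continuous fun z : S => (QuotientGroup.mk (f z * g) : SL2C ⧸ GammaO d) := by
    refine continuous_quot_mk.comp ?_
    refine Continuous.subtype_mk (f := fun z : S => (f z).1 * g.1) ?_ _
    exact Continuous.matrix_mul (continuous_subtype_val.comp hf) continuous_const
  have : CompactSpace S := isCompact_iff_compactSpace.mp hS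
  convert isCompact_range hF using 1
  ext x
  constructor
  · rintro ⟨c, hc, rfl⟩
    obtain ⟨v, rfl⟩ := (mem_Cdiag_iff c).mp hc
    obtain ⟨n, hn1, hn2⟩ := exists_mem_Ico_zpow (norm_pos_iff.mpr v.ne_zero) h1
    have hpos : 0 < ‖(u : ℂ)‖ ^ n := zpow_pos (by linarith) n
    have hn : ‖((v * (u ^ n)⁻¹ : ℂˣ) : ℂ)‖ = ‖(v : ℂ)‖ / ‖(u : ℂ)‖ ^ n := by
      simp [div_eq_mul_inv]
    have hmem : ((v * (u ^ n)⁻¹ : ℂˣ) : ℂ) ∈ S := by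
      refine ⟨?_, ?_⟩
      · rw [hn, one_le_div hpos]
        exact hn1
      · rw [hn, div_le_iff₀ hpos, ← zpow_one_add₀ (by linarith), add_comm]
        exact hn2.le
    refine ⟨⟨_, hmem⟩, ?_⟩
    have hfv : f ⟨_, hmem⟩ = diagHom (v * (u ^ n)⁻¹) := by
      simp only [f, Units.mk0_val]
    change f ⟨_, hmem⟩ • (QuotientGroup.mk g : SL2C ⧸ GammaO d) = diagHom v • QuotientGroup.mk g
    rw [hfv, map_mul, mul_smul, ← _root_.zpow_neg, diagHom_zpow_smul hγ hu]
  · rintro ⟨z, rfl⟩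
    exact ⟨f z, (mem_Cdiag_iff _).mpr ⟨_, rfl⟩, rfl⟩

theorem pow_twelve_eq_one_s17 {d : ℕ} (hd : 0 < d) {u : ℂ} (h1 : ‖u‖ = 1)
    (hu : u + u⁻¹ ∈ Od d) : u ^ 12 = 1 := by
  have h0 : u ≠ 0 := by
    rintro rfl
    simp at h1
  obtain ⟨a, b, hab⟩ := exists_int_of_mem_Od hu
  have hreal : u + u⁻¹ = ((2 * u.re : ℝ) : ℂ) := by
    rw [Complex.inv_eq_conj h1, Complex.add_conj]
  have hb : b = 0 := by
    have him := congrArg Complex.im (hreal.symm.trans hab)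
    simpa [hd.ne'] using him
  have ha : (2 * u.re : ℝ) = a := by
    have hre := congrArg Complex.re (hreal.symm.trans hab)
    simpa [hb] using hre
  have habs := abs_le.mp (h1 ▸ Complex.abs_re_le_norm u)
  have ha1 : -2 ≤ a := by
    have : (-2 : ℝ) ≤ a := by linarith
    exact_mod_cast this
  have ha2 : a ≤ 2 := by
    have : (a : ℝ) ≤ 2 := by linarith
    exact_mod_cast this
  have hquad : u ^ 2 - a * u + 1 = 0 := by
    have : u + u⁻¹ = a := by simpa [hb] using hab
    field_simp at this
    linear_combination this
  interval_cases a <;> push_cast at hquad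
  · have h : u + 1 = 0 := pow_eq_zero_iff two_ne_zero |>.mp (by linear_combination hquad)
    rw [eq_neg_of_add_eq_zero_left h]
    norm_num
  · have h : u ^ 3 = 1 := by linear_combination (u - 1) * hquad
    rw [show u ^ 12 = (u ^ 3) ^ 4 by ring, h, one_pow]
  · have h : u ^ 2 = -1 := by linear_combination hquad
    rw [show u ^ 12 = (u ^ 2) ^ 6 by ring, h]
    norm_num
  · have h : u ^ 3 = -1 := by linear_combination (u + 1) * hquad
    rw [show u ^ 12 = (u ^ 3) ^ 4 by ring, h]
    norm_num
  · have h : u - 1 = 0 := pow_eq_zero_iff two_ne_zero |>.mp (by linear_combination hquad)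
    rw [sub_eq_zero.mp h, one_pow]

/-- Let `γ ∈ Γ = SL_2(ℤ[√(-d)])` be semisimple of infinite order and `g ∈ SL_2(ℂ)` with
`gγg⁻¹ ∈ C`. Then the orbit `C·π(g)` is a compact subset of `X = SL_2(ℂ)/Γ`. -/
theorem statement_17 (d : ℕ) (hd : 0 < d) (hsf : Squarefree d)
    (γ : SL2C) (hγ : γ ∈ GammaO d)
    (hss : ∃ g : SL2C, (g * γ * g⁻¹).1 0 1 = 0 ∧ (g * γ * g⁻¹).1 1 0 = 0)
    (hio : ∀ m : ℕ, 1 ≤ m → γ ^ m ≠ 1)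
    (g : SL2C) (hg : g * γ * g⁻¹ ∈ Cdiag) :
    IsCompact ((· • (QuotientGroup.mk g : SL2C ⧸ GammaO d)) '' Cdiag) := by
  obtain ⟨u, hu⟩ := (mem_Cdiag_iff _).mp hg
  rcases lt_trichotomy ‖(u : ℂ)‖ 1 with h | h | h
  · -- Replace `γ` by its inverse, whose eigenvalue `u⁻¹` has absolute value greater than one.
    refine isCompact_orbit (γ := γ⁻¹) (u := u⁻¹) (inv_mem hγ) ?_ ?_
    · rw [map_inv, hu]
      group
    · rw [Units.val_inv_eq_inv_val, norm_inv]
      exact (one_lt_inv₀ (norm_pos_iff.mpr u.ne_zero)).mpr h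
  · exfalso
    have htr : (u : ℂ) + (u : ℂ)⁻¹ = γ.1 0 0 + γ.1 1 1 := by
      have e : γ = g⁻¹ * (diagHom u * g) := by
        rw [hu]
        group
      have ht : γ.1.trace = (diagHom u).1.trace := by
        rw [e]
        change (g⁻¹.1 * ((diagHom u).1 * g.1)).trace = _
        rw [Matrix.trace_mul_comm, Matrix.mul_assoc]
        change ((diagHom u * (g * g⁻¹) : SL2C) : Matrix (Fin 2) (Fin 2) ℂ).trace = _
        rw [mul_inv_cancel, mul_one]
      rw [Matrix.trace_fin_two, Matrix.trace_fin_two, diagHom_val] at ht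
      simpa using ht.symm
    have h12 : (u : ℂ) ^ 12 = 1 :=
      pow_twelve_eq_one_s17 hd h (htr ▸ add_mem (hγ 0 0) (hγ 1 1))
    have hu12 : u ^ 12 = 1 := Units.ext (by simpa using h12)
    refine hio 12 (by norm_num) ?_
    have hc := congrArg diagHom hu12
    rw [map_pow, hu, conj_pow, map_one] at hc
    exact conj_eq_one_iff.mp hc
  · exact isCompact_orbit hγ hu h
end

section
/- Let g ∈ SL_2(ℂ) be such that gγg⁻¹ ∈ C, and let Y = C·π(g) be the resulting compact C-orbit in X. Then exactly one of the following two alternatives holds: either every A-orbit in Y is dense in Y (the A-action on Y is minimal), or every A-orbit in Y is compact (in particular, closed). -/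
/-!
The map `expDiag : z ↦ diag(eᶻ, e⁻ᶻ)` is a homomorphism from `ℂ` onto `C` carrying `ℝ` onto `A`.
Write `gγg⁻¹ = expDiag w` with `w = a + iθ`; this element fixes `π(g)`, hence every point of `Y`,
since `C` is commutative.

The real part `a` is nonzero (`re_ne_zero_of_conj`): otherwise `tr γ = 2 cos θ` is a real element
of `ℤ[√(-d)]`, so an integer in `[-2, 2]`, and then `γ¹² = 1`.

* If `θ / 2π` is rational, some `expDiag (q w)` with `q ≥ 1` equals `expDiag (q a) ∈ A`. So
  `s ↦ expDiag s • y` is periodic of nonzero period, and each `A`-orbit is the image of a compact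
  interval (`isCompact_orbit`).
* If `θ / 2π` is irrational, `θℤ + 2πℤ` is dense in `ℝ`, and multiplying by powers of `expDiag w`
  shows that the rotations keeping a point inside its `A`-orbit are dense; hence each `A`-orbit is
  dense in `Y` (`expDiag_smul_mem_closure`).

The two alternatives exclude each other: `X` is Hausdorff because `Γ` is closed, so an orbit that
is both compact and dense in `Y` is equal to `Y`. Then for every `t` some `s` gives
`expDiag (it - s) ∈ gΓg⁻¹`, which embeds an interval of values `t` into the countable group `Γ`
(`exists_notMem_orbit`).
-/

open Matrix Pointwise

/-! ### The ring `ℤ[√(-d)]` and discreteness of `Γ` -/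

/-- `z` lies in `ℤ[√(-d)]` exactly when `Re z` and `Im z / √d` are integers. -/
theorem mem_Od_iff {d : ℕ} (hd : 0 < d) (z : ℂ) :
    z ∈ Od d ↔ (z.re ∈ Set.range ((↑) : ℤ → ℝ) ∧ z.im / √(d : ℝ) ∈ Set.range ((↑) : ℤ → ℝ)) := by
  have hs : √(d : ℝ) ≠ 0 := (Real.sqrt_pos.2 (by exact_mod_cast hd)).ne'
  have hss : √(d : ℝ) * √(d : ℝ) = d := Real.mul_self_sqrt (by positivity)
  constructor
  · intro h
    induction h using Subring.closure_induction with
    | mem x hx =>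
      obtain rfl : x = Complex.I * √(d : ℝ) := by simpa using hx
      exact ⟨⟨0, by simp⟩, ⟨1, by simp [hs]⟩⟩
    | zero => exact ⟨⟨0, by simp⟩, ⟨0, by simp⟩⟩
    | one => exact ⟨⟨1, by simp⟩, ⟨0, by simp⟩⟩
    | add x y _ _ hx hy =>
      obtain ⟨⟨a, ha⟩, b, hb⟩ := hx
      obtain ⟨⟨a', ha'⟩, b', hb'⟩ := hy
      exact ⟨⟨a + a', by simp [ha, ha']⟩, ⟨b + b', by simp [hb, hb', add_div]⟩⟩
    | neg x _ hx =>
      obtain ⟨⟨a, ha⟩, b, hb⟩ := hx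
      exact ⟨⟨-a, by simp [ha]⟩, ⟨-b, by simp [hb, neg_div]⟩⟩
    | mul x y _ _ hx hy =>
      obtain ⟨⟨a, ha⟩, b, hb⟩ := hx
      obtain ⟨⟨a', ha'⟩, b', hb'⟩ := hy
      rw [eq_div_iff hs] at hb hb'
      refine ⟨⟨a * a' - d * b * b', ?_⟩, ⟨a * b' + b * a', ?_⟩⟩
      · push_cast
        rw [Complex.mul_re, ← ha, ← ha', ← hb, ← hb']
        linear_combination (b * b' : ℝ) * hss
      · push_cast
        rw [Complex.mul_im, eq_div_iff hs, ← ha, ← ha', ← hb, ← hb']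
        ring
  · rintro ⟨⟨a, ha⟩, b, hb⟩
    rw [eq_div_iff hs] at hb
    have hz : z = (a : ℂ) + (b : ℂ) * (Complex.I * √(d : ℝ)) := by
      apply Complex.ext <;> simp [ha, hb]
    rw [hz]
    exact add_mem (intCast_mem _ a)
      (mul_mem (intCast_mem _ b) (Subring.subset_closure rfl))

theorem isClosed_Od {d : ℕ} (hd : 0 < d) : IsClosed (Od d : Set ℂ) := by
  have hZ : IsClosed (Set.range ((↑) : ℤ → ℝ)) := Int.isClosedEmbedding_coe_real.isClosed_range
  have h : (Od d : Set ℂ) = Complex.re ⁻¹' Set.range ((↑) : ℤ → ℝ) ∩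
      (fun z : ℂ => z.im / √(d : ℝ)) ⁻¹' Set.range ((↑) : ℤ → ℝ) := by
    ext z
    exact mem_Od_iff hd z
  rw [h]
  exact (hZ.preimage Complex.continuous_re).inter
    (hZ.preimage (Complex.continuous_im.div_const _))

theorem countable_Od {d : ℕ} (hd : 0 < d) : (Od d : Set ℂ).Countable := by
  have hs : √(d : ℝ) ≠ 0 := (Real.sqrt_pos.2 (by exact_mod_cast hd)).ne'
  refine (Set.countable_range
    (fun p : ℤ × ℤ => (p.1 : ℂ) + (p.2 : ℂ) * (Complex.I * √(d : ℝ)))).mono ?_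
  intro z hz
  obtain ⟨⟨a, ha⟩, b, hb⟩ := (mem_Od_iff hd z).1 hz
  rw [eq_div_iff hs] at hb
  exact ⟨(a, b), by apply Complex.ext <;> simp [ha, hb]⟩

theorem isClosed_GammaO {d : ℕ} (hd : 0 < d) : IsClosed (GammaO d : Set SL2C) := by
  have h : (GammaO d : Set SL2C) = ⋂ i, ⋂ j, (fun g : SL2C => g.1 i j) ⁻¹' (Od d : Set ℂ) := by
    ext g
    simp only [Set.mem_iInter]
    rfl
  rw [h]
  refine isClosed_iInter fun i => isClosed_iInter fun j => (isClosed_Od hd).preimage ?_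
  exact (continuous_apply_apply i j).comp continuous_subtype_val

theorem countable_GammaO {d : ℕ} (hd : 0 < d) : (GammaO d : Set SL2C).Countable := by
  have : Countable (Od d) := (countable_Od hd).to_subtype
  let F : GammaO d → (Fin 2 → Fin 2 → Od d) := fun g i j => ⟨g.1.1 i j, g.2 i j⟩
  have hF : Function.Injective F := by
    intro g h e
    apply Subtype.ext
    apply Subtype.ext
    ext i j
    exact congrArg Subtype.val (congrFun (congrFun e i) j)
  exact hF.countable

instance isTopologicalGroup_SL2C : IsTopologicalGroup SL2C :=
  Matrix.SpecialLinearGroup.topologicalGroup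

/-- A quotient by a closed, not necessarily normal, subgroup is Hausdorff. -/
theorem t2Space_quotient {d : ℕ} (hd : 0 < d) : T2Space (SL2C ⧸ GammaO d) := by
  rw [t2Space_iff_of_isOpenQuotientMap
    (QuotientGroup.isOpenQuotientMap_mk : IsOpenQuotientMap (QuotientGroup.mk : SL2C → SL2C ⧸ GammaO d))]
  have h : {q : SL2C × SL2C | (q.1 : SL2C ⧸ GammaO d) = q.2} =
      (fun q : SL2C × SL2C => q.1⁻¹ * q.2) ⁻¹' (GammaO d : Set SL2C) := by
    ext q
    exact QuotientGroup.eq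
  rw [h]
  exact (isClosed_GammaO hd).preimage (continuous_fst.inv.mul continuous_snd)

/-! ### The exponential parametrization of the diagonal subgroup -/

/-- The homomorphism `z ↦ diag(eᶻ, e⁻ᶻ)` from `(ℂ, +)` onto the diagonal subgroup `C`. It maps
`ℝ` onto `A`. -/
noncomputable def expDiag (z : ℂ) : SL2C :=
  ⟨!![Complex.exp z, 0; 0, Complex.exp (-z)], by
    simp [Matrix.det_fin_two_of, ← Complex.exp_add]⟩

theorem expDiag_add (z w : ℂ) : expDiag (z + w) = expDiag z * expDiag w := by
  apply Subtype.ext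
  rw [Matrix.SpecialLinearGroup.coe_mul]
  simp [expDiag, Complex.exp_add, add_comm]

theorem expDiag_eq_of_exp_eq {z w : ℂ} (h : Complex.exp z = Complex.exp w) :
    expDiag z = expDiag w := by
  apply Subtype.ext
  simp [expDiag, Complex.exp_neg, h]

theorem expDiag_zero : expDiag 0 = 1 := by
  apply Subtype.ext
  simp [expDiag, Matrix.one_fin_two]

theorem continuous_expDiag : Continuous expDiag := by
  refine Continuous.subtype_mk ?_ _
  refine continuous_matrix fun i j => ?_
  fin_cases i <;> fin_cases j <;> simp <;> fun_prop

theorem expDiag_mem_Cdiag (z : ℂ) : expDiag z ∈ Cdiag := by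
  constructor <;> simp [expDiag]

theorem det_of_mem_Cdiag {c : SL2C} (hc : c ∈ Cdiag) : c.1 0 0 * c.1 1 1 = 1 := by
  have h := c.2
  rw [Matrix.det_fin_two, hc.1, hc.2] at h
  simpa using h

theorem eq_expDiag {c : SL2C} (hc : c ∈ Cdiag) {z : ℂ} (h : Complex.exp z = c.1 0 0) :
    expDiag z = c := by
  have h1 := eq_inv_of_mul_eq_one_right (det_of_mem_Cdiag hc)
  apply Subtype.ext
  ext i j
  fin_cases i <;> fin_cases j
  · simpa [expDiag] using h
  · simpa [expDiag] using hc.1.symm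
  · simpa [expDiag] using hc.2.symm
  · simpa [expDiag, Complex.exp_neg, h] using h1.symm

theorem Cdiag_eq_range : Cdiag = Set.range expDiag := by
  apply Set.Subset.antisymm
  · intro c hc
    have h0 : c.1 0 0 ≠ 0 := left_ne_zero_of_mul_eq_one (det_of_mem_Cdiag hc)
    exact ⟨Complex.log (c.1 0 0), eq_expDiag hc (Complex.exp_log h0)⟩
  · rintro _ ⟨z, rfl⟩
    exact expDiag_mem_Cdiag z

theorem Apos_eq_range : Apos = Set.range fun s : ℝ => expDiag s := by
  apply Set.Subset.antisymm
  · rintro c ⟨h01, h10, him, hre, -, -⟩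
    refine ⟨Real.log (c.1 0 0).re, eq_expDiag ⟨h01, h10⟩ ?_⟩
    rw [← Complex.ofReal_exp, Real.exp_log hre]
    apply Complex.ext <;> simp [him]
  · rintro _ ⟨s, rfl⟩
    have h : Complex.exp (-(s : ℂ)) = (Real.exp (-s) : ℝ) := by push_cast; rfl
    refine ⟨by simp [expDiag], by simp [expDiag], ?_, ?_, ?_, ?_⟩
    · simp [expDiag, ← Complex.ofReal_exp]
    · simp [expDiag, ← Complex.ofReal_exp, Real.exp_pos]
    · simp [expDiag, h, -Complex.ofReal_exp]
    · simp [expDiag, h, -Complex.ofReal_exp, Real.exp_pos]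

theorem continuous_expDiag_smul {d : ℕ} (y : SL2C ⧸ GammaO d) :
    Continuous fun z : ℂ => expDiag z • y := by
  induction y using QuotientGroup.induction_on with
  | H g =>
    exact QuotientGroup.continuous_mk.comp (continuous_expDiag.mul continuous_const)

/-! ### The translation length of `γ` -/

/-- A number `x` of the form `e^{iθ}` with `x + x⁻¹` an integer is a twelfth root of unity. -/
theorem exp_pow_twelve {θ : ℝ} {m : ℤ} (h : 2 * Real.cos θ = m) :
    Complex.exp (θ * Complex.I) ^ 12 = 1 := by
  have hm1 : m ≤ 2 := by
    have : (m : ℝ) ≤ 2 := by linarith [Real.cos_le_one θ]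
    exact_mod_cast this
  have hm2 : -2 ≤ m := by
    have : (-2 : ℝ) ≤ m := by linarith [Real.neg_one_le_cos θ]
    exact_mod_cast this
  have hq : Complex.exp (θ * Complex.I) ^ 2 - m * Complex.exp (θ * Complex.I) + 1 = 0 := by
    have h1 : (m : ℂ) = Complex.exp (θ * Complex.I) + Complex.exp (-θ * Complex.I) := by
      rw [← Complex.two_cos, ← Complex.ofReal_cos]
      exact_mod_cast h.symm
    have h2 : Complex.exp (-θ * Complex.I) * Complex.exp (θ * Complex.I) = 1 := by
      rw [← Complex.exp_add]; simp
    rw [h1]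
    linear_combination -h2
  generalize Complex.exp (θ * Complex.I) = x at hq
  interval_cases m <;> push_cast at hq
  · have : x = -1 := by
      have : (x + 1) ^ 2 = 0 := by linear_combination hq
      linear_combination pow_eq_zero_iff two_ne_zero |>.1 this
    rw [this]; norm_num
  · have : x ^ 3 = 1 := by linear_combination (x - 1) * hq
    rw [show x ^ 12 = (x ^ 3) ^ 4 by ring, this]; norm_num
  · have : x ^ 2 = -1 := by linear_combination hq
    rw [show x ^ 12 = (x ^ 2) ^ 6 by ring, this]; norm_num
  · have : x ^ 3 = -1 := by linear_combination (x + 1) * hq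
    rw [show x ^ 12 = (x ^ 3) ^ 4 by ring, this]; norm_num
  · have : x = 1 := by
      have : (x - 1) ^ 2 = 0 := by linear_combination hq
      linear_combination pow_eq_zero_iff two_ne_zero |>.1 this
    rw [this]; norm_num

theorem expDiag_pow (z : ℂ) (n : ℕ) : expDiag z ^ n = expDiag (n * z) := by
  induction n with
  | zero => simp [expDiag_zero]
  | succ n ih =>
    rw [pow_succ, ih, ← expDiag_add]
    congr 1
    push_cast
    ring

/-- An element of infinite order of `Γ` is not elliptic: its eigenvalues do not lie on the unit
circle, since its trace would otherwise be an integer in `[-2, 2]`. -/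
theorem re_ne_zero_of_conj {d : ℕ} (hd : 0 < d) {γ g : SL2C} (hγ : γ ∈ GammaO d)
    (hio : ∀ m : ℕ, 1 ≤ m → γ ^ m ≠ 1) {w : ℂ} (hw : expDiag w = g * γ * g⁻¹) : w.re ≠ 0 := by
  intro h0
  have hwI : w = w.im * Complex.I := by apply Complex.ext <;> simp [h0]
  have htr : γ.1.trace = Complex.exp w + Complex.exp (-w) := by
    have h1 : (expDiag w).1.trace = γ.1.trace := by
      rw [hw]
      rw [Matrix.SpecialLinearGroup.coe_mul, Matrix.trace_mul_comm,
        ← Matrix.SpecialLinearGroup.coe_mul, inv_mul_cancel_left]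
    rw [← h1, Matrix.trace_fin_two]
    simp [expDiag]
  have hmem : γ.1.trace ∈ Od d := by
    rw [Matrix.trace_fin_two]
    exact add_mem (hγ 0 0) (hγ 1 1)
  obtain ⟨⟨m, hm⟩, -⟩ := (mem_Od_iff hd _).1 hmem
  have hcos : 2 * Real.cos w.im = m := by
    have h2 : γ.1.trace = ((2 * Real.cos w.im : ℝ) : ℂ) := by
      rw [htr, hwI]
      push_cast
      rw [Complex.two_cos]
      simp
    rw [hm, h2, Complex.ofReal_re]
  have h12 : expDiag w ^ 12 = 1 := by
    rw [expDiag_pow, ← expDiag_zero]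
    apply expDiag_eq_of_exp_eq
    have := exp_pow_twelve hcos
    rw [← hwI, ← Complex.exp_nat_mul] at this
    rw [this, Complex.exp_zero]
  rw [hw, conj_pow] at h12
  exact hio 12 (by norm_num) (by simpa using h12)

/-! ### The dichotomy -/

section Orbit

variable {d : ℕ}

theorem expDiag_zsmul_fix {y : SL2C ⧸ GammaO d} {w : ℂ} (h : expDiag w • y = y) (n : ℤ) :
    expDiag (n * w) • y = y := by
  have h' : expDiag (-w) • y = y := by
    conv_lhs => rw [← h]
    rw [smul_smul, ← expDiag_add]
    simp [expDiag_zero]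
  induction n with
  | zero => simp [expDiag_zero]
  | succ n ih =>
    push_cast at ih ⊢
    rw [add_mul, one_mul, expDiag_add, mul_smul, h, ih]
  | pred n ih =>
    push_cast at ih ⊢
    rw [sub_mul, one_mul, sub_eq_add_neg, expDiag_add, mul_smul, h', ih]

theorem expDiag_fix_translate {x : SL2C ⧸ GammaO d} {w : ℂ} (h : expDiag w • x = x) (u : ℂ) :
    expDiag w • expDiag u • x = expDiag u • x := by
  rw [smul_smul, ← expDiag_add, add_comm, expDiag_add, mul_smul, h]

theorem Apos_orbit_eq (y : SL2C ⧸ GammaO d) :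
    (· • y) '' Apos = Set.range fun s : ℝ => expDiag s • y := by
  rw [Apos_eq_range, ← Set.range_comp]
  rfl

/-- If the rotation angle of a stabilizing element is a rational multiple of `2π`, then a power of
it is a nontrivial element of `A`, so that the `A`-orbit is the image of a circle. -/
theorem isCompact_orbit_s19 {y : SL2C ⧸ GammaO d} {w : ℂ} (h : expDiag w • y = y) (hw : w.re ≠ 0)
    (hθ : ¬ Irrational (w.im / (2 * Real.pi))) : IsCompact ((· • y) '' Apos) := by
  obtain ⟨q, hq⟩ : ∃ q : ℚ, (q : ℝ) = w.im / (2 * Real.pi) := by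
    simpa [Irrational] using hθ
  have hden : (q.den : ℝ) ≠ 0 := by exact_mod_cast q.den_ne_zero
  have him : q.den * w.im = q.num * (2 * Real.pi) := by
    rw [Rat.cast_def, div_eq_div_iff hden (by positivity)] at hq
    linarith
  have hfix : expDiag ((q.den * w.re : ℝ) : ℂ) • y = y := by
    have h1 := expDiag_zsmul_fix h q.den
    rwa [expDiag_eq_of_exp_eq (w := ((q.den * w.re : ℝ) : ℂ))] at h1
    rw [Complex.exp_eq_exp_iff_exists_int]
    refine ⟨q.num, ?_⟩
    apply Complex.ext
    · simp
    · simpa using him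
  have hper : Function.Periodic (fun s : ℝ => expDiag s • y) (q.den * w.re) := by
    intro s
    change expDiag ((s + q.den * w.re : ℝ) : ℂ) • y = expDiag s • y
    rw [Complex.ofReal_add, expDiag_add, mul_smul, hfix]
  rw [Apos_orbit_eq, ← hper.image_uIcc (mul_ne_zero hden hw) 0]
  exact isCompact_uIcc.image ((continuous_expDiag_smul y).comp Complex.continuous_ofReal)

/-- If the rotation angle `θ` of a stabilizing element is an irrational multiple of `2π`, then
`θℤ + 2πℤ` is dense in `ℝ`, so the rotations that preserve the `A`-orbit are dense. -/
theorem expDiag_smul_mem_closure {y : SL2C ⧸ GammaO d} {w : ℂ} (h : expDiag w • y = y)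
    (hθ : Irrational (w.im / (2 * Real.pi))) (v : ℂ) :
    expDiag v • y ∈ closure ((· • y) '' Apos) := by
  let f : ℝ → SL2C ⧸ GammaO d := fun t => expDiag (v.re + t * Complex.I) • y
  have hf : Continuous f := (continuous_expDiag_smul y).comp (by fun_prop)
  have hmaps : Set.MapsTo f (AddSubgroup.closure {w.im, 2 * Real.pi} : Set ℝ)
      ((· • y) '' Apos) := by
    intro t ht
    obtain ⟨m, k, rfl⟩ := AddSubgroup.mem_closure_pair.1 ht
    rw [Apos_orbit_eq]
    refine ⟨v.re - m * w.re, ?_⟩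
    have e : expDiag (v.re + ((m • w.im + k • (2 * Real.pi) : ℝ) : ℂ) * Complex.I) =
        expDiag (((v.re - m * w.re : ℝ) : ℂ) + m * w) := by
      apply expDiag_eq_of_exp_eq
      rw [Complex.exp_eq_exp_iff_exists_int]
      refine ⟨k, ?_⟩
      apply Complex.ext <;> simp
    change _ = expDiag _ • y
    rw [e, expDiag_add, mul_smul, expDiag_zsmul_fix h m]
  have hv := map_mem_closure hf ((dense_addSubgroupClosure_pair_iff.2 hθ) v.im) hmaps
  simpa only [f, Complex.re_add_im] using hv

/-- An `A`-orbit is not the whole `C`-orbit: otherwise the stabilizer in `C` would surject onto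
the uncountable group `C/A`, whereas `Γ` is countable. -/
theorem exists_notMem_orbit (hd : 0 < d) (g : SL2C) :
    ∃ t : ℝ, expDiag (t * Complex.I) • (g : SL2C ⧸ GammaO d) ∉
      (· • (g : SL2C ⧸ GammaO d)) '' Apos := by
  by_contra! hall
  have hs : ∀ t : ℝ, ∃ s : ℝ, g⁻¹ * expDiag (-s + t * Complex.I) * g ∈ GammaO d := by
    intro t
    have ht := hall t
    rw [Apos_orbit_eq] at ht
    obtain ⟨s, hs⟩ := ht
    refine ⟨s, ?_⟩
    have hs' : ((expDiag s * g : SL2C) : SL2C ⧸ GammaO d) = (expDiag (t * Complex.I) * g : SL2C) :=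
      hs
    rw [QuotientGroup.eq] at hs'
    have hinv : (expDiag s)⁻¹ = expDiag (-s) := by
      rw [inv_eq_iff_mul_eq_one, ← expDiag_add]
      simp [expDiag_zero]
    rw [expDiag_add, ← hinv]
    simpa [mul_assoc] using hs'
  choose s hs using hs
  have hinj : Set.InjOn (fun t : ℝ => g⁻¹ * expDiag (-s t + t * Complex.I) * g)
      (Set.Icc 0 1) := by
    intro t ht t' ht' e
    have e1 : expDiag (-s t + t * Complex.I) = expDiag (-s t' + t' * Complex.I) :=
      mul_left_cancel (mul_right_cancel e)
    have e2 : Complex.exp (-s t + t * Complex.I) = Complex.exp (-s t' + t' * Complex.I) := by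
      simpa only [expDiag, Matrix.of_apply, Matrix.cons_val_zero, Matrix.cons_val'] using
        congrArg (fun c : SL2C => c.1 0 0) e1
    obtain ⟨n, hn⟩ := Complex.exp_eq_exp_iff_exists_int.1 e2
    have him : t = t' + n * (2 * Real.pi) := by simpa using congrArg Complex.im hn
    have hpi := Real.pi_gt_three
    have hn0 : n = 0 := by
      have h1 : (n : ℝ) < 1 := by nlinarith [ht.1, ht.2, ht'.1, ht'.2]
      have h2 : (-1 : ℝ) < n := by nlinarith [ht.1, ht.2, ht'.1, ht'.2]
      have h1' : n < 1 := by exact_mod_cast h1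
      have h2' : -1 < n := by exact_mod_cast h2
      omega
    simpa [hn0] using him
  have hc : (Set.Icc (0 : ℝ) 1).Countable :=
    Set.MapsTo.countable_of_injOn (fun t _ => hs t) hinj (countable_GammaO hd)
  rw [Cardinal.Real.Icc_countable_iff] at hc
  norm_num at hc

end Orbit

theorem xor_of_or_of_not_and {P Q : Prop} (h1 : P ∨ Q) (h2 : ¬(P ∧ Q)) : Xor P Q := by
  grind

/-- Let `γ ∈ Γ = SL_2(ℤ[√(-d)])` be semisimple of infinite order, `g ∈ SL_2(ℂ)` with
`gγg⁻¹ ∈ C`, and `Y = C·π(g)` the resulting compact `C`-orbit in `X`. Then exactly one of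
the following holds: either every `A`-orbit in `Y` is dense in `Y`, or every `A`-orbit in
`Y` is compact. -/
theorem statement_19 (d : ℕ) (hd : 0 < d) (hsf : Squarefree d)
    (γ : SL2C) (hγ : γ ∈ GammaO d)
    (hss : ∃ g : SL2C, (g * γ * g⁻¹).1 0 1 = 0 ∧ (g * γ * g⁻¹).1 1 0 = 0)
    (hio : ∀ m : ℕ, 1 ≤ m → γ ^ m ≠ 1)
    (g : SL2C) (hg : g * γ * g⁻¹ ∈ Cdiag) :
    Xor'
      (∀ y ∈ (· • (QuotientGroup.mk g : SL2C ⧸ GammaO d)) '' Cdiag,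
        (· • (QuotientGroup.mk g : SL2C ⧸ GammaO d)) '' Cdiag ⊆ closure ((· • y) '' Apos))
      (∀ y ∈ (· • (QuotientGroup.mk g : SL2C ⧸ GammaO d)) '' Cdiag,
        IsCompact ((· • y) '' Apos)) := by
  obtain ⟨w, hw⟩ : ∃ w, expDiag w = g * γ * g⁻¹ := by
    rwa [Cdiag_eq_range] at hg
  have hre := re_ne_zero_of_conj hd hγ hio hw
  have hfix : expDiag w • (g : SL2C ⧸ GammaO d) = g := by
    rw [hw]
    change ((g * γ * g⁻¹ * g : SL2C) : SL2C ⧸ GammaO d) = g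
    rw [inv_mul_cancel_right, QuotientGroup.mk_mul_of_mem g hγ]
  have hY : (· • (QuotientGroup.mk g : SL2C ⧸ GammaO d)) '' Cdiag =
      Set.range fun u : ℂ => expDiag u • (g : SL2C ⧸ GammaO d) := by
    rw [Cdiag_eq_range, ← Set.range_comp]
    rfl
  rw [hY]
  refine xor_of_or_of_not_and ?_ ?_
  · by_cases hθ : Irrational (w.im / (2 * Real.pi))
    · left
      rintro _ ⟨u, rfl⟩ _ ⟨v, rfl⟩
      have h := expDiag_smul_mem_closure (expDiag_fix_translate hfix u) hθ (v - u)
      rwa [smul_smul (expDiag (v - u)), ← expDiag_add, sub_add_cancel] at h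
    · right
      rintro _ ⟨u, rfl⟩
      exact isCompact_orbit_s19 (expDiag_fix_translate hfix u) hre hθ
  · rintro ⟨hdense, hcomp⟩
    have := t2Space_quotient hd
    have hmem : (g : SL2C ⧸ GammaO d) ∈
        Set.range fun u : ℂ => expDiag u • (g : SL2C ⧸ GammaO d) := ⟨0, by simp [expDiag_zero]⟩
    obtain ⟨t, ht⟩ := exists_notMem_orbit hd g
    have h := hdense _ hmem ⟨t * Complex.I, rfl⟩
    rw [(hcomp _ hmem).isClosed.closure_eq] at h
    exact ht h
end
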